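/- Let β ∈ C_c^∞(ℝ²) and set β_q(x) := β(x−q) for q ∈ ℝ². There is a constant C > 0, depending only on φ and β, such that for every h ∈ (0,1] and every Schwartz function u : ℝ² → ℂ satisfying Pu = 0: (Σ_{q ∈ ℤ²} ‖P(β_q u)‖_{L²(ℝ²)}²)^{1/2} ≤ C h ‖u‖_{L²(ℝ²)}. -/

import Mathlib

noncomputable section

open MeasureTheory Complex

abbrev R2 : Type := EuclideanSpace ℝ (Fin 2)

/-- Partial derivative of a complex-valued function in coordinate direction `j`. -/
def pdC (j : Fin 2) (f : R2 → ℂ) (x : R2) : ℂ :=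
  fderiv ℝ f x (EuclideanSpace.single j 1)

/-- The operator `D_j = -i ∂_j` acting on complex-valued functions. -/
def Dop (j : Fin 2) (f : R2 → ℂ) (x : R2) : ℂ := -Complex.I * pdC j f x

/-- Partial derivative of a real-valued function in coordinate direction `j`. -/
def pdR (j : Fin 2) (f : R2 → ℝ) (x : R2) : ℝ :=
  fderiv ℝ f x (EuclideanSpace.single j 1)

/-- The Laplacian of a real-valued function. -/
def lapR (f : R2 → ℝ) (x : R2) : ℝ := pdR 0 (pdR 0 f) x + pdR 1 (pdR 1 f) x

/-- The rescaled potential `φ_h(x) = φ(h^{-1/2} x)`. -/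
def phih (φ : R2 → ℝ) (h : ℝ) (x : R2) : ℝ := φ ((h ^ (-(1/2 : ℝ)) : ℝ) • x)

/-- `A u = (h/2) D₁ u - (h/2) (∂₂ φ_h) u`. -/
def opAh (φ : R2 → ℝ) (h : ℝ) (u : R2 → ℂ) (x : R2) : ℂ :=
  ((h / 2 : ℝ) : ℂ) * Dop 0 u x - ((h / 2 * pdR 1 (phih φ h) x : ℝ) : ℂ) * u x

/-- `B u = (h/2) D₂ u + (h/2) (∂₁ φ_h) u`. -/
def opBh (φ : R2 → ℝ) (h : ℝ) (u : R2 → ℂ) (x : R2) : ℂ :=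
  ((h / 2 : ℝ) : ℂ) * Dop 1 u x + ((h / 2 * pdR 0 (phih φ h) x : ℝ) : ℂ) * u x

/-- `P u = A² u + B² u - (h²/4)(Δ φ_h) u - u`. -/
def opPh (φ : R2 → ℝ) (h : ℝ) (u : R2 → ℂ) (x : R2) : ℂ :=
  opAh φ h (opAh φ h u) x + opBh φ h (opBh φ h u) x
    - ((h ^ 2 / 4 * lapR (phih φ h) x : ℝ) : ℂ) * u x - u x

/-- The lattice point `(q₁, q₂) ∈ ℤ²` viewed as a point of `ℝ²`. -/
def intPt (q : ℤ × ℤ) : R2 := (EuclideanSpace.equiv (Fin 2) ℝ).symm ![(q.1 : ℝ), (q.2 : ℝ)]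


open scoped LineDeriv ContDiff

/-- General first-order operator. -/
def opT (j : Fin 2) (h : ℝ) (a : R2 → ℝ) (u : R2 → ℂ) (x : R2) : ℂ :=
  ((h / 2 : ℝ) : ℂ) * Dop j u x + ((a x : ℝ) : ℂ) * u x

lemma opAh_eq (φ : R2 → ℝ) (h : ℝ) (u : R2 → ℂ) :
    opAh φ h u = opT 0 h (fun x => -(h / 2 * pdR 1 (phih φ h) x)) u := by
  funext x
  simp only [opAh, opT]
  push_cast
  ring

lemma opBh_eq (φ : R2 → ℝ) (h : ℝ) (u : R2 → ℂ) :
    opBh φ h u = opT 1 h (fun x => (h / 2 * pdR 0 (phih φ h) x)) u := by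
  funext x
  simp only [opBh, opT]

lemma pdC_ofReal_mul (j : Fin 2) (b : R2 → ℝ) (u : R2 → ℂ) (x : R2)
    (hb : DifferentiableAt ℝ b x) (hu : DifferentiableAt ℝ u x) :
    pdC j (fun x => (b x : ℂ) * u x) x = (b x : ℂ) * pdC j u x + (pdR j b x : ℂ) * u x := by
  have h1 : HasFDerivAt (fun x => (b x : ℂ)) (Complex.ofRealCLM.comp (fderiv ℝ b x)) x :=
    Complex.ofRealCLM.hasFDerivAt.comp x hb.hasFDerivAt
  have h2 := h1.mul hu.hasFDerivAt
  have h3 : (fun x => (b x : ℂ) * u x) = ((fun x => (b x : ℂ)) * u) := rfl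
  unfold pdC pdR
  rw [h3, h2.fderiv]
  simp
  ring

lemma pdC_add (j : Fin 2) (f g : R2 → ℂ) (x : R2)
    (hb : DifferentiableAt ℝ f x) (hu : DifferentiableAt ℝ g x) :
    pdC j (fun x => f x + g x) x = pdC j f x + pdC j g x := by
  unfold pdC
  rw [fderiv_fun_add hb hu]; simp

lemma pdC_const_mul (j : Fin 2) (c : ℂ) (f : R2 → ℂ) (x : R2)
    (hb : DifferentiableAt ℝ f x) :
    pdC j (fun x => c * f x) x = c * pdC j f x := by
  unfold pdC
  rw [fderiv_const_mul hb]; simp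

lemma opT_mul (j : Fin 2) (h : ℝ) (a b : R2 → ℝ) (u : R2 → ℂ) (x : R2)
    (hb : DifferentiableAt ℝ b x) (hu : DifferentiableAt ℝ u x) :
    opT j h a (fun x => (b x : ℂ) * u x) x =
      (b x : ℂ) * opT j h a u x + (-Complex.I * (h / 2)) * ((pdR j b x : ℂ) * u x) := by
  unfold opT Dop
  rw [pdC_ofReal_mul j b u x hb hu]
  push_cast
  ring

lemma opT_opT_mul (j : Fin 2) (h : ℝ) (a b : R2 → ℝ) (u : R2 → ℂ) (x : R2)
    (hb : Differentiable ℝ b) (hb' : Differentiable ℝ (pdR j b)) (hu : Differentiable ℝ u)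
    (hTu : Differentiable ℝ (opT j h a u)) :
    opT j h a (opT j h a (fun x => (b x : ℂ) * u x)) x =
      (b x : ℂ) * opT j h a (opT j h a u) x - Complex.I * h * ((pdR j b x : ℂ) * opT j h a u x)
        - (h ^ 2 / 4) * ((pdR j (pdR j b) x : ℂ) * u x) := by
  have e1 : opT j h a (fun x => (b x : ℂ) * u x) = fun x =>
      (b x : ℂ) * opT j h a u x + (-Complex.I * (h / 2)) * ((pdR j b x : ℂ) * u x) := by
    funext x; exact opT_mul j h a b u x (hb x) (hu x)
  rw [e1]
  have d1 : Differentiable ℝ (fun x => (b x : ℂ) * opT j h a u x) :=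
    (Complex.ofRealCLM.differentiable.comp hb).mul hTu
  have d2 : Differentiable ℝ (fun x => (pdR j b x : ℂ) * u x) :=
    (Complex.ofRealCLM.differentiable.comp hb').mul hu
  have e2 := opT_mul j h a b (opT j h a u) x (hb x) (hTu x)
  have e3 := opT_mul j h a (pdR j b) u x (hb' x) (hu x)
  have e4 : ∀ c : ℂ, opT j h a (fun x => (b x : ℂ) * opT j h a u x + c * ((pdR j b x : ℂ) * u x)) x
      = opT j h a (fun x => (b x : ℂ) * opT j h a u x) x
        + c * opT j h a (fun x => (pdR j b x : ℂ) * u x) x := by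
    intro c
    rw [show ∀ f : R2 → ℂ, opT j h a f x
      = ((h / 2 : ℝ) : ℂ) * (-Complex.I * pdC j f x) + ((a x : ℝ) : ℂ) * f x from fun _ => rfl,
      pdC_add j _ _ x (d1 x) ((d2 x).const_mul _), pdC_const_mul j _ _ x (d2 x)]
    simp only [opT, Dop]
    ring
  rw [e4, e2, e3]
  ring_nf
  simp only [Complex.I_sq]
  ring

/-- `opT` on Schwartz functions. -/
lemma exists_opT_schwartz (j : Fin 2) (h : ℝ) (a : R2 → ℝ) (ha : a.HasTemperateGrowth)
    (u : SchwartzMap R2 ℂ) : ∃ v : SchwartzMap R2 ℂ, ∀ x, v x = opT j h a u x := by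
  refine ⟨(-Complex.I * (h / 2)) • (∂_{(EuclideanSpace.single j (1 : ℝ) : R2)} u)
    + SchwartzMap.smulLeftCLM ℂ a u, fun x => ?_⟩
  rw [_root_.add_apply, _root_.smul_apply, SchwartzMap.smulLeftCLM_apply_apply ha,
    SchwartzMap.lineDerivOp_apply_eq_fderiv]
  unfold opT Dop pdC
  simp
  ring

lemma ibp (j : Fin 2) (h : ℝ) (a : R2 → ℝ) (u v w : SchwartzMap R2 ℂ)
    (hv : ∀ x, v x = opT j h a u x) (hw : ∀ x, w x = opT j h a v x) :
    ∫ x, ((starRingEnd ℂ) (u x) * w x).re = ∫ x, ‖v x‖ ^ 2 := by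
  set e : R2 := EuclideanSpace.single j (1 : ℝ)
  let L : ℂ →L[ℝ] ℂ →L[ℝ] ℝ := innerSL ℝ
  have hL : ∀ z w : ℂ, L z w = ((starRingEnd ℂ) z * w).re := by
    intro z w
    change inner ℝ z w = _
    rw [Complex.inner, mul_comm]
  have key := SchwartzMap.integral_bilinear_lineDerivOp_right_eq_neg_left (μ := volume) u
    ((-Complex.I * (h / 2)) • v) L e
  have i1 : Integrable (fun x => L (u x) (w x)) :=
    (SchwartzMap.bilinLeftCLM L w.hasTemperateGrowth u).integrable
  have i2 : Integrable (fun x => L (u x) ((∂_{e} ((-Complex.I * (h / 2)) • v)) x)) :=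
    (SchwartzMap.bilinLeftCLM L (∂_{e} ((-Complex.I * (h / 2)) • v)).hasTemperateGrowth u).integrable
  have i3 : Integrable (fun x => L ((∂_{e} u) x) (((-Complex.I * (h / 2)) • v) x)) :=
    (SchwartzMap.bilinLeftCLM L ((-Complex.I * (h / 2)) • v).hasTemperateGrowth (∂_{e} u)).integrable
  have i4 : Integrable (fun x => L (v x) (v x)) :=
    (SchwartzMap.bilinLeftCLM L v.hasTemperateGrowth v).integrable
  have pt : ∀ x, L (u x) (w x) - L (v x) (v x) = L (u x) ((∂_{e} ((-Complex.I * (h / 2)) • v)) x)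
      + L ((∂_{e} u) x) (((-Complex.I * (h / 2)) • v) x) := by
    intro x
    have hd : (∂_{e} ((-Complex.I * (h / 2)) • v)) x = (-Complex.I * (h / 2)) * pdC j v x := by
      rw [LineDeriv.lineDerivOp_smul, _root_.smul_apply, SchwartzMap.lineDerivOp_apply_eq_fderiv]
      rfl
    have hd2 : (∂_{e} u) x = pdC j u x := by
      rw [SchwartzMap.lineDerivOp_apply_eq_fderiv]; rfl
    rw [hd, hd2, _root_.smul_apply]
    simp only [hL, hw x]
    rw [show opT j h a v x = ((h / 2 : ℝ) : ℂ) * (-Complex.I * pdC j v x) + ((a x : ℝ) : ℂ) * v x from rfl]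
    have hvx : v x = ((h / 2 : ℝ) : ℂ) * (-Complex.I * pdC j u x) + ((a x : ℝ) : ℂ) * u x := hv x
    generalize pdC j v x = p at *
    generalize pdC j u x = q at *
    generalize u x = s at *
    have hre := congrArg Complex.re hvx
    have him := congrArg Complex.im hvx
    generalize v x = t at *
    simp at hre him ⊢
    rw [hre, him]
    ring
  have : ∫ x, (L (u x) (w x) - L (v x) (v x)) = 0 := by
    rw [integral_congr_ae (Filter.Eventually.of_forall pt), integral_add i2 i3, key]
    ring
  rw [integral_sub i1 i4] at this
  have h4 : ∀ x, L (v x) (v x) = ‖v x‖ ^ 2 := by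
    intro x; exact real_inner_self_eq_norm_sq (v x)
  simp only [hL] at this h4
  simp only [h4] at this
  linarith

lemma fderiv_temperate (φ : R2 → ℝ) (hφ_smooth : ContDiff ℝ (⊤ : ℕ∞) φ)
    (hφ_bd : ∀ n : ℕ, 2 ≤ n → ∃ C : ℝ, ∀ x : R2, ‖iteratedFDeriv ℝ n φ x‖ ≤ C) :
    Function.HasTemperateGrowth (fderiv ℝ φ) := by
  have hG : ContDiff ℝ ∞ (fderiv ℝ φ) := hφ_smooth.fderiv_right (by simp)
  refine ⟨hG, fun n => ?_⟩
  rcases n with _ | n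
  · obtain ⟨C, hC⟩ := hφ_bd 2 le_rfl
    have hC0 : 0 ≤ C := (norm_nonneg _).trans (hC 0)
    have hb : ∀ x, ‖fderiv ℝ (fderiv ℝ φ) x‖ ≤ C := by
      intro x
      have := hC x
      rwa [← norm_iteratedFDeriv_fderiv, ← norm_iteratedFDeriv_fderiv, norm_iteratedFDeriv_zero]
        at this
    refine ⟨1, ‖fderiv ℝ φ 0‖ + C, fun x => ?_⟩
    have h1 := Convex.norm_image_sub_le_of_norm_fderiv_le (𝕜 := ℝ) (f := fderiv ℝ φ) (s := Set.univ)
      (fun x _ => (hG.differentiable (by simp)) x) (fun x _ => hb x) convex_univ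
      (Set.mem_univ 0) (Set.mem_univ x)
    rw [norm_iteratedFDeriv_zero]
    have h2 : ‖fderiv ℝ φ x‖ ≤ ‖fderiv ℝ φ 0‖ + ‖fderiv ℝ φ x - fderiv ℝ φ 0‖ := by
      have := norm_add_le (fderiv ℝ φ 0) (fderiv ℝ φ x - fderiv ℝ φ 0)
      simpa using this
    rw [sub_zero] at h1
    nlinarith [norm_nonneg x, norm_nonneg (fderiv ℝ φ 0)]
  · obtain ⟨C, hC⟩ := hφ_bd (n + 2) (by omega)
    refine ⟨0, C, fun x => ?_⟩
    rw [norm_iteratedFDeriv_fderiv]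
    simpa using hC x

lemma pdR_comp_smul (j : Fin 2) (f : R2 → ℝ) (c : ℝ) :
    pdR j (fun x => f (c • x)) = fun x => c * pdR j f (c • x) := by
  funext x
  unfold pdR
  rw [fderiv_comp_smul]
  simp

lemma pdR_const_mul (j : Fin 2) (f : R2 → ℝ) (c : ℝ) :
    pdR j (fun x => c * f x) = fun x => c * pdR j f x := by
  funext x
  unfold pdR
  rw [show (fun x => c * f x) = c • f from rfl, fderiv_const_smul_field]
  simp

lemma pdR_comp_sub (j : Fin 2) (f : R2 → ℝ) (c : R2) :
    pdR j (fun x => f (x - c)) = fun x => pdR j f (x - c) := by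
  funext x
  unfold pdR
  rw [fderiv_comp_sub]

lemma pdR_temperate (φ : R2 → ℝ) (hφ_smooth : ContDiff ℝ (⊤ : ℕ∞) φ)
    (hφ_bd : ∀ n : ℕ, 2 ≤ n → ∃ C : ℝ, ∀ x : R2, ‖iteratedFDeriv ℝ n φ x‖ ≤ C)
    (h : ℝ) (k : ℝ) (j : Fin 2) :
    Function.HasTemperateGrowth (fun x => k * pdR j (phih φ h) x) := by
  have hG := fderiv_temperate φ hφ_smooth hφ_bd
  have e : phih φ h = fun x => φ ((h ^ (-(1/2 : ℝ)) : ℝ) • x) := rfl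
  rw [e, pdR_comp_smul]
  set c := (h ^ (-(1/2 : ℝ)) : ℝ)
  have h1 : Function.HasTemperateGrowth (fun x : R2 => c • x) :=
    (c • ContinuousLinearMap.id ℝ R2).hasTemperateGrowth
  have h2 := hG.comp h1
  have h3 := (ContinuousLinearMap.apply ℝ ℝ (EuclideanSpace.single j (1 : ℝ) : R2)).hasTemperateGrowth.comp h2
  have h4 := ((k * c) • ContinuousLinearMap.id ℝ ℝ).hasTemperateGrowth.comp h3
  convert h4 using 1
  funext x
  simp [pdR]
  ring

lemma lap_bd (φ : R2 → ℝ) (hφ_smooth : ContDiff ℝ (⊤ : ℕ∞) φ)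
    (hφ_bd : ∀ n : ℕ, 2 ≤ n → ∃ C : ℝ, ∀ x : R2, ‖iteratedFDeriv ℝ n φ x‖ ≤ C) :
    ∃ C : ℝ, 0 ≤ C ∧ ∀ h ∈ Set.Ioc (0 : ℝ) 1, ∀ x, h ^ 2 / 4 * lapR (phih φ h) x ≤ C := by
  obtain ⟨C, hC⟩ := hφ_bd 2 le_rfl
  have hC0 : 0 ≤ C := (norm_nonneg _).trans (hC 0)
  have hb : ∀ x, ‖fderiv ℝ (fderiv ℝ φ) x‖ ≤ C := by
    intro x
    have := hC x
    rwa [← norm_iteratedFDeriv_fderiv, ← norm_iteratedFDeriv_fderiv, norm_iteratedFDeriv_zero]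
      at this
  have hG : ContDiff ℝ ∞ (fderiv ℝ φ) := hφ_smooth.fderiv_right (by simp)
  have hp : ∀ j x, pdR j (pdR j φ) x ≤ C := by
    intro j x
    set e : R2 := EuclideanSpace.single j (1 : ℝ)
    have hne : ‖e‖ = 1 := by simp [e]
    have : pdR j (pdR j φ) x = fderiv ℝ (fderiv ℝ φ) x e e := by
      change fderiv ℝ (fun y => fderiv ℝ φ y e) x e = _
      rw [fderiv_clm_apply (hG.differentiable (by simp) x) (differentiableAt_const _)]
      simp
    rw [this]
    refine (le_abs_self _).trans ?_
    rw [← Real.norm_eq_abs]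
    refine (ContinuousLinearMap.le_opNorm _ _).trans ?_
    rw [hne, mul_one]
    refine (ContinuousLinearMap.le_opNorm _ _).trans ?_
    rw [hne, mul_one]
    exact hb x
  refine ⟨C, hC0, fun h hh x => ?_⟩
  have e : phih φ h = fun x => φ ((h ^ (-(1/2 : ℝ)) : ℝ) • x) := rfl
  have hc : (h ^ (-(1/2 : ℝ)) : ℝ) * (h ^ (-(1/2 : ℝ)) : ℝ) = h⁻¹ := by
    rw [← Real.rpow_add hh.1, ← Real.rpow_neg_one]; norm_num
  unfold lapR
  rw [e]
  simp only [pdR_comp_smul]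
  set c := (h ^ (-(1/2 : ℝ)) : ℝ)
  have h2 : ∀ j : Fin 2, pdR j (fun x => c * pdR j φ (c • x)) = fun x => c * (c * pdR j (pdR j φ) (c • x)) := by
    intro j
    rw [pdR_const_mul j (fun x => pdR j φ (c • x)) c, pdR_comp_smul]
  rw [h2, h2]
  have h3 : h ^ 2 / 4 * (c * (c * pdR 0 (pdR 0 φ) (c • x)) + c * (c * pdR 1 (pdR 1 φ) (c • x)))
      = h / 4 * (pdR 0 (pdR 0 φ) (c • x) + pdR 1 (pdR 1 φ) (c • x)) := by
    have : h ^ 2 * (c * c) = h := by rw [hc]; field_simp [hh.1.ne']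
    linear_combination (pdR 0 (pdR 0 φ) (c • x) + pdR 1 (pdR 1 φ) (c • x)) / 4 * this
  rw [h3]
  have := hp 0 (c • x)
  have := hp 1 (c • x)
  nlinarith [hh.1, hh.2]

lemma pdR_contDiff (j : Fin 2) (f : R2 → ℝ) (hf : ContDiff ℝ ∞ f) : ContDiff ℝ ∞ (pdR j f) := by
  have : ContDiff ℝ ∞ (fderiv ℝ f) := hf.fderiv_right (by simp)
  exact this.clm_apply contDiff_const

lemma pdR_supp (j : Fin 2) (f : R2 → ℝ) : tsupport (pdR j f) ⊆ tsupport f :=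
  tsupport_fderiv_apply_subset ℝ _

/-- Uniform control of the number of overlaps. -/
lemma count_bd (R : ℝ) : ∃ N : ℕ, ∀ x : R2,
    ∑' q : ℤ × ℤ, Set.indicator {q : ℤ × ℤ | ‖x - intPt q‖ ≤ R} (fun _ => (1 : ENNReal)) q ≤ N := by
  refine ⟨(⌊2 * R + 2⌋).toNat * (⌊2 * R + 2⌋).toNat, fun x => ?_⟩
  set S := Finset.Icc ⌈x 0 - R⌉ ⌊x 0 + R⌋ ×ˢ Finset.Icc ⌈x 1 - R⌉ ⌊x 1 + R⌋ with hS
  have hcard : ∀ t : ℝ, (Finset.Icc ⌈t - R⌉ ⌊t + R⌋).card ≤ (⌊2 * R + 2⌋).toNat := by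
    intro t
    rw [Int.card_Icc]
    apply Int.toNat_le_toNat
    rw [Int.le_floor]
    push_cast
    linarith [Int.floor_le (t + R), Int.le_ceil (t - R)]
  rw [tsum_eq_sum (s := S)]
  · calc ∑ q ∈ S, Set.indicator {q : ℤ × ℤ | ‖x - intPt q‖ ≤ R} (fun _ => (1 : ENNReal)) q
        ≤ ∑ q ∈ S, (1 : ENNReal) := Finset.sum_le_sum fun q _ => Set.indicator_le_self _ _ _
      _ = (S.card : ENNReal) := by simp
      _ ≤ ((⌊2 * R + 2⌋.toNat * ⌊2 * R + 2⌋.toNat : ℕ) : ENNReal) := by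
        rw [hS, Finset.card_product]
        exact_mod_cast Nat.mul_le_mul (hcard _) (hcard _)
  · intro q hq
    apply Set.indicator_of_notMem
    intro hq'
    apply hq
    have h0 := (PiLp.norm_apply_le (x - intPt q) 0).trans hq'
    have h1 := (PiLp.norm_apply_le (x - intPt q) 1).trans hq'
    simp [intPt, abs_le] at h0 h1
    simp only [hS, Finset.mem_product, Finset.mem_Icc, Int.ceil_le, Int.le_floor]
    refine ⟨⟨?_, ?_⟩, ?_, ?_⟩ <;> linarith [h0.1, h0.2, h1.1, h1.2]

lemma bdd_supp (g : R2 → ℝ) (hg : Continuous g) (β : R2 → ℝ) (hβ : HasCompactSupport β)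
    (hs : tsupport g ⊆ tsupport β) :
    ∃ M R : ℝ, ∀ x, |g x| ≤ M ∧ (R < ‖x‖ → g x = 0) := by
  have hc : HasCompactSupport g := hβ.of_isClosed_subset (isClosed_tsupport _) hs
  obtain ⟨M, hM⟩ := hg.bounded_above_of_compact_support hc
  obtain ⟨R, hR⟩ := hβ.isBounded.exists_norm_le
  refine ⟨M, R, fun x => ⟨hM x, fun hx => ?_⟩⟩
  by_contra hne
  exact absurd (hR x (hs (subset_tsupport _ hne))) (not_le.mpr hx)

lemma eLpNorm_two_sq (f : R2 → ℂ) :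
    (eLpNorm f 2 volume) ^ 2 = ∫⁻ x, ENNReal.ofReal (‖f x‖ ^ 2) := by
  have := eLpNorm_nnreal_pow_eq_lintegral (f := f) (μ := (volume : Measure R2)) (p := 2) (by norm_num)
  simp only [NNReal.coe_ofNat, ENNReal.rpow_ofNat, ENNReal.coe_ofNat] at this
  rw [this]
  congr 1
  funext x
  rw [ENNReal.ofReal_pow (norm_nonneg _), ofReal_norm]

lemma schwartz_sq_integrable (u : SchwartzMap R2 ℂ) : Integrable (fun x => ‖u x‖ ^ 2) :=
  (u.memLp 2 volume).integrable_norm_pow (by norm_num)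

lemma pointwise_bd (h M : ℝ) (hh : h ∈ Set.Ioc (0 : ℝ) 1) (b1 b2 b3 : ℝ) (v1 v2 s : ℂ)
    (h1 : |b1| ≤ M) (h2 : |b2| ≤ M) (h3 : |b3| ≤ M) :
    ‖-(Complex.I * h * ((b1 : ℂ) * v1 + (b2 : ℂ) * v2)) - (h ^ 2 / 4) * ((b3 : ℂ) * s)‖ ^ 2
      ≤ h ^ 2 * (3 * M ^ 2) * (‖v1‖ ^ 2 + ‖v2‖ ^ 2 + ‖s‖ ^ 2) := by
  have hM : 0 ≤ M := (abs_nonneg _).trans h1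
  have hh0 := hh.1
  have hq : h ^ 2 / 4 ≤ h := by nlinarith [hh.1, hh.2]
  have n1 : ‖-(Complex.I * h * ((b1 : ℂ) * v1 + (b2 : ℂ) * v2)) - (h ^ 2 / 4) * ((b3 : ℂ) * s)‖
      ≤ h * M * (‖v1‖ + ‖v2‖ + ‖s‖) := by
    refine (norm_sub_le _ _).trans ?_
    rw [norm_neg, norm_mul, norm_mul, norm_mul, norm_mul, Complex.norm_I,
      Complex.norm_of_nonneg hh0.le, Complex.norm_real, Real.norm_eq_abs]
    have e1 : ‖(h : ℂ) ^ 2 / 4‖ = h ^ 2 / 4 := by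
      rw [norm_div, norm_pow, Complex.norm_of_nonneg hh0.le]; norm_num
    rw [e1]
    have a1 : ‖(b1 : ℂ) * v1 + (b2 : ℂ) * v2‖ ≤ M * ‖v1‖ + M * ‖v2‖ := by
      refine (norm_add_le _ _).trans ?_
      rw [norm_mul, norm_mul, Complex.norm_real, Real.norm_eq_abs, Complex.norm_real, Real.norm_eq_abs]
      gcongr
    have a2 : h ^ 2 / 4 * (|b3| * ‖s‖) ≤ h * (M * ‖s‖) := by gcongr
    have a3 : 1 * h * ‖(b1 : ℂ) * v1 + (b2 : ℂ) * v2‖ ≤ h * (M * ‖v1‖ + M * ‖v2‖) := by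
      rw [one_mul]; gcongr
    linarith
  have n2 := pow_le_pow_left₀ (norm_nonneg _) n1 2
  refine n2.trans ?_
  have : (‖v1‖ + ‖v2‖ + ‖s‖) ^ 2 ≤ 3 * (‖v1‖ ^ 2 + ‖v2‖ ^ 2 + ‖s‖ ^ 2) := by
    nlinarith [sq_nonneg (‖v1‖ - ‖v2‖), sq_nonneg (‖v1‖ - ‖s‖), sq_nonneg (‖v2‖ - ‖s‖)]
  have h5 := mul_le_mul_of_nonneg_left this (sq_nonneg (h * M))
  nlinarith

/-- The commutator formula. -/
lemma opPh_mul (φ : R2 → ℝ) (h : ℝ) (b : R2 → ℝ) (hb : ContDiff ℝ ∞ b) (u v1 v2 : SchwartzMap R2 ℂ)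
    (hv1 : ∀ x, v1 x = opAh φ h u x) (hv2 : ∀ x, v2 x = opBh φ h u x)
    (hP : ∀ x : R2, opPh φ h (⇑u) x = 0) (x : R2) :
    opPh φ h (fun x => (b x : ℂ) * u x) x =
      -(Complex.I * h * ((pdR 0 b x : ℂ) * v1 x + (pdR 1 b x : ℂ) * v2 x))
        - (h ^ 2 / 4) * ((lapR b x : ℝ) * u x) := by
  have hv1' : opAh φ h u = v1 := by funext x; exact (hv1 x).symm
  have hv2' : opBh φ h u = v2 := by funext x; exact (hv2 x).symm
  have hbd : Differentiable ℝ b := hb.differentiable (by simp)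
  have hp : ∀ j, Differentiable ℝ (pdR j b) := fun j =>
    (pdR_contDiff j b hb).differentiable (by simp)
  have eA : opAh φ h (opAh φ h (fun x => (b x : ℂ) * u x)) x =
      (b x : ℂ) * opAh φ h (opAh φ h u) x - Complex.I * h * ((pdR 0 b x : ℂ) * opAh φ h u x)
        - (h ^ 2 / 4) * ((pdR 0 (pdR 0 b) x : ℂ) * u x) := by
    have hd : Differentiable ℝ (opAh φ h u) := by rw [hv1']; exact v1.differentiable
    simp only [opAh_eq] at hd ⊢
    exact opT_opT_mul 0 h _ b u x hbd (hp 0) u.differentiable hd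
  have eB : opBh φ h (opBh φ h (fun x => (b x : ℂ) * u x)) x =
      (b x : ℂ) * opBh φ h (opBh φ h u) x - Complex.I * h * ((pdR 1 b x : ℂ) * opBh φ h u x)
        - (h ^ 2 / 4) * ((pdR 1 (pdR 1 b) x : ℂ) * u x) := by
    have hd : Differentiable ℝ (opBh φ h u) := by rw [hv2']; exact v2.differentiable
    simp only [opBh_eq] at hd ⊢
    exact opT_opT_mul 1 h _ b u x hbd (hp 1) u.differentiable hd
  have hPx := hP x
  unfold opPh at hPx ⊢
  rw [eA, eB, hv1 x, hv2 x]
  simp only [lapR]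
  simp only [lapR] at hPx
  push_cast at hPx ⊢
  linear_combination (b x : ℂ) * hPx

/-- The energy bound. -/
lemma energy (φ : R2 → ℝ) (h C : ℝ) (hC : ∀ x, h ^ 2 / 4 * lapR (phih φ h) x ≤ C)
    (ht : ∀ (k : ℝ) (j : Fin 2), Function.HasTemperateGrowth (fun x => k * pdR j (phih φ h) x))
    (u v1 v2 : SchwartzMap R2 ℂ)
    (hv1 : ∀ x, v1 x = opAh φ h u x) (hv2 : ∀ x, v2 x = opBh φ h u x)
    (hP : ∀ x : R2, opPh φ h (⇑u) x = 0) :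
    ∫ x, (‖v1 x‖ ^ 2 + ‖v2 x‖ ^ 2 + ‖u x‖ ^ 2) ≤ (2 + C) * ∫ x, ‖u x‖ ^ 2 := by
  have hv1' : opAh φ h u = v1 := by funext x; exact (hv1 x).symm
  have hv2' : opBh φ h u = v2 := by funext x; exact (hv2 x).symm
  have ht1 : Function.HasTemperateGrowth (fun x => -(h / 2 * pdR 1 (phih φ h) x)) := by
    simpa only [neg_mul] using ht (-(h / 2)) 1
  obtain ⟨w1, hw1⟩ := exists_opT_schwartz 0 h _ ht1 v1
  obtain ⟨w2, hw2⟩ := exists_opT_schwartz 1 h _ (ht (h / 2) 0) v2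
  have k1 := ibp 0 h _ u v1 w1 (fun x => by rw [hv1 x, opAh_eq]) hw1
  have k2 := ibp 1 h _ u v2 w2 (fun x => by rw [hv2 x, opBh_eq]) hw2
  have hw1' : ∀ x, w1 x = opAh φ h (opAh φ h u) x := by
    intro x; rw [hv1', hw1 x, opAh_eq]
  have hw2' : ∀ x, w2 x = opBh φ h (opBh φ h u) x := by
    intro x; rw [hv2', hw2 x, opBh_eq]
  have i0 := schwartz_sq_integrable u
  have i1 := schwartz_sq_integrable v1
  have i2 := schwartz_sq_integrable v2
  have j : ∀ w : SchwartzMap R2 ℂ, Integrable (fun x => ((starRingEnd ℂ) (u x) * w x).re) := by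
    intro w
    have := (SchwartzMap.bilinLeftCLM (innerSL ℝ : ℂ →L[ℝ] ℂ →L[ℝ] ℝ)
      w.hasTemperateGrowth u).integrable (μ := volume)
    refine this.congr (Filter.Eventually.of_forall fun x => ?_)
    change inner ℝ (u x) (w x) = _
    rw [Complex.inner, mul_comm]
  have pt : ∀ x, ((starRingEnd ℂ) (u x) * w1 x).re + ((starRingEnd ℂ) (u x) * w2 x).re
      ≤ (1 + C) * ‖u x‖ ^ 2 := by
    intro x
    have hPx := hP x
    unfold opPh at hPx
    rw [← hw1', ← hw2'] at hPx
    have e : w1 x + w2 x = ((h ^ 2 / 4 * lapR (phih φ h) x + 1 : ℝ) : ℂ) * u x := by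
      push_cast at hPx ⊢
      linear_combination hPx
    have e2 : ((starRingEnd ℂ) (u x) * w1 x).re + ((starRingEnd ℂ) (u x) * w2 x).re
        = (h ^ 2 / 4 * lapR (phih φ h) x + 1) * ‖u x‖ ^ 2 := by
      rw [← Complex.add_re, ← mul_add, e, mul_left_comm, mul_comm ((starRingEnd ℂ) (u x)),
        Complex.mul_conj, ← Complex.ofReal_mul, Complex.ofReal_re, Complex.normSq_eq_norm_sq]
    rw [e2]
    have := hC x
    exact mul_le_mul_of_nonneg_right (by linarith) (sq_nonneg _)
  have hm := integral_mono ((j w1).add (j w2)) (i0.const_mul (1 + C)) pt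
  simp only [Pi.add_apply] at hm
  rw [integral_add (j w1) (j w2), k1, k2, integral_const_mul] at hm
  have e3 : ∫ x, (‖v1 x‖ ^ 2 + ‖v2 x‖ ^ 2 + ‖u x‖ ^ 2)
      = (∫ x, (‖v1 x‖ ^ 2 + ‖v2 x‖ ^ 2)) + ∫ x, ‖u x‖ ^ 2 := integral_add (i1.add i2) i0
  rw [e3, integral_add i1 i2]
  linarith

/-- For a cutoff `β ∈ C_c^∞` and solutions of `P u = 0`,
`(∑_{q ∈ ℤ²} ‖P(β_q u)‖_{L²}²)^{1/2} ≤ C h ‖u‖_{L²}`. -/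
theorem stmt7 (φ : R2 → ℝ) (hφ_smooth : ContDiff ℝ (⊤ : ℕ∞) φ)
    (hφ_bd : ∀ n : ℕ, 2 ≤ n → ∃ C : ℝ, ∀ x : R2, ‖iteratedFDeriv ℝ n φ x‖ ≤ C)
    (β : R2 → ℝ) (hβ_smooth : ContDiff ℝ (⊤ : ℕ∞) β) (hβ_supp : HasCompactSupport β) :
    ∃ C > 0, ∀ h ∈ Set.Ioc (0 : ℝ) 1, ∀ u : SchwartzMap R2 ℂ,
      (∀ x : R2, opPh φ h (⇑u) x = 0) →
      (∑' q : ℤ × ℤ,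
          (eLpNorm (opPh φ h (fun x => ((β (x - intPt q) : ℝ) : ℂ) * u x)) 2 volume) ^ 2)
            ^ (1/2 : ℝ) ≤
        ENNReal.ofReal (C * h) * eLpNorm (⇑u) 2 volume := by
  obtain ⟨C, hC0, hC⟩ := lap_bd φ hφ_smooth hφ_bd
  have hc0 := pdR_contDiff 0 β hβ_smooth
  have hc1 := pdR_contDiff 1 β hβ_smooth
  have hc00 := pdR_contDiff 0 _ hc0
  have hc11 := pdR_contDiff 1 _ hc1
  obtain ⟨M0, R0, hM0⟩ := bdd_supp (pdR 0 β) hc0.continuous β hβ_supp (pdR_supp 0 β)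
  obtain ⟨M1, R1, hM1⟩ := bdd_supp (pdR 1 β) hc1.continuous β hβ_supp (pdR_supp 1 β)
  obtain ⟨M2, R2', hM2⟩ := bdd_supp (pdR 0 (pdR 0 β)) hc00.continuous β hβ_supp
    ((pdR_supp 0 _).trans (pdR_supp 0 β))
  obtain ⟨M3, R3, hM3⟩ := bdd_supp (pdR 1 (pdR 1 β)) hc11.continuous β hβ_supp
    ((pdR_supp 1 _).trans (pdR_supp 1 β))
  have p0 : 0 ≤ M0 := (abs_nonneg _).trans (hM0 0).1
  have p1 : 0 ≤ M1 := (abs_nonneg _).trans (hM1 0).1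
  have p2 : 0 ≤ M2 := (abs_nonneg _).trans (hM2 0).1
  have p3 : 0 ≤ M3 := (abs_nonneg _).trans (hM3 0).1
  set M := M0 + M1 + M2 + M3 with hMdef
  set R := max (max R0 R1) (max R2' R3) with hRdef
  obtain ⟨N, hN⟩ := count_bd R
  set K := (N : ℝ) * (3 * M ^ 2) * (2 + C) with hK
  have hK0 : 0 ≤ K := by positivity
  refine ⟨√K + 1, by positivity, fun h hh u hP => ?_⟩
  have hh0 := hh.1
  have ht := fun k j => pdR_temperate φ hφ_smooth hφ_bd h k j
  have ht1 : Function.HasTemperateGrowth (fun x => -(h / 2 * pdR 1 (phih φ h) x)) := by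
    simpa only [neg_mul] using ht (-(h / 2)) 1
  obtain ⟨v1, hv1⟩ := exists_opT_schwartz 0 h _ ht1 u
  obtain ⟨v2, hv2⟩ := exists_opT_schwartz 1 h _ (ht (h / 2) 0) u
  have hv1' : ∀ x, v1 x = opAh φ h u x := fun x => by rw [hv1 x, opAh_eq]
  have hv2' : ∀ x, v2 x = opBh φ h u x := fun x => by rw [hv2 x, opBh_eq]
  have hE := energy φ h C (hC h hh) ht u v1 v2 hv1' hv2' hP
  set G : R2 → ℝ := fun x => ‖v1 x‖ ^ 2 + ‖v2 x‖ ^ 2 + ‖u x‖ ^ 2 with hG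
  have hG0 : ∀ x, 0 ≤ G x := fun x => by simp only [hG]; positivity
  have iG : Integrable G :=
    ((schwartz_sq_integrable v1).add (schwartz_sq_integrable v2)).add (schwartz_sq_integrable u)
  have hGc : Continuous G :=
    ((v1.continuous.norm.pow 2).add (v2.continuous.norm.pow 2)).add (u.continuous.norm.pow 2)
  set k := h ^ 2 * (3 * M ^ 2) with hk
  have hk0 : 0 ≤ k := by positivity
  have pt : ∀ q : ℤ × ℤ, ∀ x, ENNReal.ofReal
      (‖opPh φ h (fun x => ((β (x - intPt q) : ℝ) : ℂ) * u x) x‖ ^ 2) ≤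
      Set.indicator {q : ℤ × ℤ | ‖x - intPt q‖ ≤ R} (fun _ => (1 : ENNReal)) q
        * ENNReal.ofReal (k * G x) := by
    intro q x
    have hb : ContDiff ℝ ∞ (fun x => β (x - intPt q)) :=
      hβ_smooth.comp (contDiff_id.sub contDiff_const)
    rw [opPh_mul φ h (fun x => β (x - intPt q)) hb u v1 v2 hv1' hv2' hP x]
    simp only [lapR, pdR_comp_sub]
    set y := x - intPt q
    by_cases hy : ‖y‖ ≤ R
    · rw [Set.indicator_of_mem (show q ∈ {q : ℤ × ℤ | ‖x - intPt q‖ ≤ R} from hy), one_mul]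
      apply ENNReal.ofReal_le_ofReal
      refine pointwise_bd h M hh _ _ _ _ _ _ ?_ ?_ ?_
      · linarith [(hM0 y).1]
      · linarith [(hM1 y).1]
      · refine (abs_add_le _ _).trans ?_
        linarith [(hM2 y).1, (hM3 y).1]
    · push Not at hy
      rw [(hM0 y).2 (lt_of_le_of_lt (by simp [hRdef]) hy), (hM1 y).2 (lt_of_le_of_lt (by simp [hRdef]) hy),
        (hM2 y).2 (lt_of_le_of_lt (by simp [hRdef]) hy), (hM3 y).2 (lt_of_le_of_lt (by simp [hRdef]) hy)]
      simp
  have hmeas : ∀ q : ℤ × ℤ, Measurable (fun x : R2 =>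
      Set.indicator {q : ℤ × ℤ | ‖x - intPt q‖ ≤ R} (fun _ => (1 : ENNReal)) q
        * ENNReal.ofReal (k * G x)) := by
    intro q
    refine Measurable.mul ?_ (ENNReal.measurable_ofReal.comp (hGc.measurable.const_mul k))
    have hS : MeasurableSet {x : R2 | ‖x - intPt q‖ ≤ R} :=
      (isClosed_le (by fun_prop) continuous_const).measurableSet
    exact (measurable_const (a := (1 : ENNReal))).indicator hS
  have hsum : ∑' q : ℤ × ℤ,
      (eLpNorm (opPh φ h (fun x => ((β (x - intPt q) : ℝ) : ℂ) * u x)) 2 volume) ^ 2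
      ≤ (ENNReal.ofReal ((√K + 1) * h) * eLpNorm (⇑u) 2 volume) ^ 2 := by
    calc _ ≤ ∑' q : ℤ × ℤ, ∫⁻ x, Set.indicator {q : ℤ × ℤ | ‖x - intPt q‖ ≤ R}
            (fun _ => (1 : ENNReal)) q * ENNReal.ofReal (k * G x) := by
          refine ENNReal.tsum_le_tsum fun q => ?_
          rw [eLpNorm_two_sq]
          exact lintegral_mono (pt q)
      _ = ∫⁻ x, ∑' q : ℤ × ℤ, Set.indicator {q : ℤ × ℤ | ‖x - intPt q‖ ≤ R}
            (fun _ => (1 : ENNReal)) q * ENNReal.ofReal (k * G x) :=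
          (lintegral_tsum fun q => (hmeas q).aemeasurable).symm
      _ ≤ ∫⁻ x, ENNReal.ofReal (N * k * G x) := by
          refine lintegral_mono fun x => ?_
          rw [ENNReal.tsum_mul_right, mul_assoc (N : ℝ) k, ENNReal.ofReal_mul (Nat.cast_nonneg N),
            ENNReal.ofReal_natCast]
          exact mul_le_mul_left (hN x) _
      _ = ENNReal.ofReal (∫ x, N * k * G x) := by
          rw [ofReal_integral_eq_lintegral_ofReal (iG.const_mul _)]
          exact Filter.Eventually.of_forall fun x => mul_nonneg (by positivity) (hG0 x)
      _ ≤ ENNReal.ofReal (((√K + 1) * h) ^ 2 * ∫ x, ‖u x‖ ^ 2) := by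
          apply ENNReal.ofReal_le_ofReal
          rw [integral_const_mul]
          have hI : 0 ≤ ∫ x, ‖u x‖ ^ 2 := integral_nonneg fun x => by positivity
          calc (N : ℝ) * k * ∫ x, G x ≤ N * k * ((2 + C) * ∫ x, ‖u x‖ ^ 2) := by gcongr
            _ = (K * h ^ 2) * ∫ x, ‖u x‖ ^ 2 := by rw [hK, hk]; ring
            _ ≤ _ := by
              gcongr
              rw [mul_pow]
              gcongr
              nlinarith [Real.sq_sqrt hK0, Real.sqrt_nonneg K]
      _ = _ := by
          rw [mul_pow (ENNReal.ofReal _), eLpNorm_two_sq, ENNReal.ofReal_mul (by positivity),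
            ENNReal.ofReal_pow (by positivity),
            ofReal_integral_eq_lintegral_ofReal (schwartz_sq_integrable u)]
          exact Filter.Eventually.of_forall fun x => by positivity
  calc _ ≤ ((ENNReal.ofReal ((√K + 1) * h) * eLpNorm (⇑u) 2 volume) ^ 2) ^ (1 / 2 : ℝ) :=
        ENNReal.rpow_le_rpow hsum (by norm_num)
    _ = _ := by
        rw [← ENNReal.rpow_natCast, ← ENNReal.rpow_mul]
        norm_num
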